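/- arXiv:1602.03849 — 2 statements merged into one kernel-verified Lean document; each statement's English description precedes it below -/
import Mathlib

section
/- For every γ ∈ (0,1] there is a constant C > 0, depending only on the dimension d and on γ, such that for every Borel probability measure ϑ on 𝕋^d = ℝ^d/ℤ^d and every t > 0: if W_γ(ϑ,ν) > t, then there exists a ∈ ℤ^d \ {0} such that |ϑ̂(a)| ≥ C t^C ‖a‖, where ν is the Lebesgue (Haar) probability measure on 𝕋^d. -/
open MeasureTheory Filter Set
open scoped ENNReal NNReal Real

/-- The `d`-dimensional torus `ℝ^d/ℤ^d`, as a product of unit circles, with the quotient metric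
and its Haar (Lebesgue) probability measure `volume`. -/
abbrev Torus (d : ℕ) := Fin d → UnitAddCircle

/-- `‖f‖_γ ≤ K` for the `γ`-Hölder norm
`‖f‖_γ = sup |f| + sup_{x ≠ y} |f(x) − f(y)|/d(x,y)^γ`. -/
def HolderNormLE {d : ℕ} (γ : ℝ) (f : Torus d → ℝ) (K : ℝ) : Prop :=
  ∃ A B : ℝ, 0 ≤ A ∧ 0 ≤ B ∧ A + B ≤ K ∧ (∀ x, |f x| ≤ A) ∧
    ∀ x y : Torus d, |f x - f y| ≤ B * dist x y ^ γ

/-- The Fourier coefficient `ϑ̂(a) = ∫ e^{2πi⟨a,x⟩} dϑ(x)` of a measure on the torus. -/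
noncomputable def fourierCoefMeasure {d : ℕ} (ϑ : Measure (Torus d)) (a : Fin d → ℤ) : ℂ :=
  ∫ x, ∏ i, fourier (a i) (x i) ∂ϑ

/-!
Convolving with the Fejér kernel `K_N` on the torus moves a `γ`-Hölder function by `O(N^(-γ/2))` in
the uniform norm, since `K_N` has mass one and `∫ K_N(u) ‖u‖^γ du = O(N^(-γ/2))`. On the other hand
`K_N` is an average of characters of frequency at most `N`, so `ϑ * K_N` differs from the constant
density `1` by at most `N^d` times the largest nonzero Fourier coefficient of `ϑ` up to frequency
`N`. Hence `|∫ f dϑ - ∫ f dν| = O(N^(-γ/2)) + N^d max |ϑ̂(a)|`, and choosing `N` to be a suitable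
power of `1/t` forces a coefficient bounded below by a power of `t`. This power can be made equal to
the multiplicative constant because `|∫ f dϑ - ∫ f dν| ≤ 2/3` stays away from `1`.
-/

open UnitAddTorus

section Measure

variable {X : Type*} [MeasurableSpace X]

theorem integrable_of_continuous {E : Type*} [TopologicalSpace X] [CompactSpace X]
    [OpensMeasurableSpace X] [NormedAddCommGroup E] [SecondCountableTopologyEither X E]
    {μ : Measure X} [IsFiniteMeasure μ] {f : X → E} (hf : Continuous f) : Integrable f μ :=
  hf.integrable_of_hasCompactSupport (.of_compactSpace f)

theorem abs_integral_le_of_forall_abs_le {μ : Measure X} [IsProbabilityMeasure μ] {f : X → ℝ}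
    {C : ℝ} (hf : ∀ x, |f x| ≤ C) : |∫ x, f x ∂μ| ≤ C := by
  simpa only [probReal_univ, mul_one, Real.norm_eq_abs] using
    norm_integral_le_of_norm_le_const (μ := μ) (f := f) (.of_forall hf)

theorem abs_integral_sub_integral_le_of_forall_abs_sub_le {μ ν : Measure X}
    [IsProbabilityMeasure μ] [IsProbabilityMeasure ν] {f : X → ℝ} (hμ : Integrable f μ)
    (hν : Integrable f ν) {D : ℝ} (hD : ∀ x y, |f x - f y| ≤ D) :
    |(∫ x, f x ∂μ) - ∫ x, f x ∂ν| ≤ D := by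
  have hmean (x : X) : |f x - ∫ y, f y ∂ν| ≤ D := by
    have h : f x - ∫ y, f y ∂ν = ∫ y, (f x - f y) ∂ν := by
      rw [integral_sub (integrable_const _) hν, integral_const, probReal_univ, one_smul]
    rw [h]
    exact abs_integral_le_of_forall_abs_le (hD x)
  have h : (∫ x, f x ∂μ) - ∫ x, f x ∂ν = ∫ x, (f x - ∫ y, f y ∂ν) ∂μ := by
    rw [integral_sub hμ (integrable_const _), integral_const, probReal_univ, one_smul]
  rw [h]
  exact abs_integral_le_of_forall_abs_le hmean

end Measure

section RealPower

theorem rpow_le_one_add_sq {u s : ℝ} (hu : 0 ≤ u) (hs₀ : 0 ≤ s) (hs₂ : s ≤ 2) :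
    u ^ s ≤ 1 + u ^ 2 := by
  rcases le_total u 1 with h | h
  · linarith [Real.rpow_le_one hu h hs₀, sq_nonneg u]
  · have := Real.rpow_le_rpow_of_exponent_le h hs₂
    rw [Real.rpow_two] at this
    linarith

theorem rpow_le_rpow_neg_half_mul {A r s : ℝ} (hA : 0 < A) (hr : 0 ≤ r) (hs₀ : 0 ≤ s)
    (hs₂ : s ≤ 2) : r ^ s ≤ A ^ (-s / 2) * (1 + A * r ^ 2) := by
  have hscale : r ^ s = A ^ (-s / 2) * (√A * r) ^ s := by
    rw [Real.mul_rpow (Real.sqrt_nonneg A) hr, ← mul_assoc, Real.sqrt_eq_rpow,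
      ← Real.rpow_mul hA.le, ← Real.rpow_add hA, show -s / 2 + 1 / 2 * s = 0 by ring,
      Real.rpow_zero, one_mul]
  have hsq : A * r ^ 2 = (√A * r) ^ 2 := by rw [mul_pow, Real.sq_sqrt hA.le]
  rw [hscale, hsq]
  gcongr
  exact rpow_le_one_add_sq (by positivity) hs₀ hs₂

theorem exists_nat_rpow_neg_le_and_mul_rpow_inv_le {s ε : ℝ} (hs : 0 < s) (hε : 0 < ε)
    (hε₁ : ε ≤ 1) : ∃ N : ℕ, N ≠ 0 ∧ (N : ℝ) ^ (-s) ≤ ε ∧ N * ε ^ s⁻¹ ≤ 2 := by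
  set R : ℝ := ε ^ (-s⁻¹) with hR
  have hR₁ : 1 ≤ R :=
    Real.one_le_rpow_of_pos_of_le_one_of_nonpos hε hε₁ (neg_nonpos.2 (inv_nonneg.2 hs.le))
  have hRN : R ≤ ⌈R⌉₊ := Nat.le_ceil R
  refine ⟨⌈R⌉₊, (Nat.ceil_pos.2 (by linarith)).ne', ?_, ?_⟩
  · calc (⌈R⌉₊ : ℝ) ^ (-s) ≤ R ^ (-s) :=
          Real.rpow_le_rpow_of_nonpos (by linarith) hRN (neg_nonpos.2 hs.le)
      _ = ε := by
          rw [hR, ← Real.rpow_mul hε.le, neg_mul_neg, inv_mul_cancel₀ hs.ne', Real.rpow_one]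
  · calc ⌈R⌉₊ * ε ^ s⁻¹ ≤ 2 * R * ε ^ s⁻¹ := by
          gcongr
          linarith [Nat.ceil_lt_add_one (zero_le_one.trans hR₁)]
      _ = 2 := by rw [mul_assoc, hR, ← Real.rpow_add hε, neg_add_cancel, Real.rpow_zero, mul_one]

theorem exists_pos_mul_rpow_self_le {c p r : ℝ} (hc : 0 < c) (hr₀ : 0 < r) (hr₁ : r < 1) :
    ∃ C : ℝ, 0 < C ∧ ∀ t, 0 < t → t ≤ r → C * t ^ C ≤ c * t ^ p := by
  have hsmall : ∀ᶠ n : ℕ in atTop, n * r ^ n < c * r ^ p :=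
    (tendsto_self_mul_const_pow_of_lt_one hr₀.le hr₁).eventually_lt_const (by positivity)
  obtain ⟨n, hn, hpn, hn₀⟩ :=
    (hsmall.and ((eventually_ge_atTop ⌈p⌉₊).and (eventually_gt_atTop 0))).exists
  refine ⟨n, Nat.cast_pos.2 hn₀, fun t ht htr => ?_⟩
  calc n * t ^ (n : ℝ) = n * t ^ ((n : ℝ) - p) * t ^ p := by
        rw [mul_assoc, ← Real.rpow_add ht, sub_add_cancel]
    _ ≤ n * r ^ ((n : ℝ) - p) * t ^ p := by
        gcongr
        exact sub_nonneg.2 (Nat.ceil_le.1 hpn)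
    _ ≤ c * t ^ p := by
        gcongr
        rw [Real.rpow_sub hr₀, Real.rpow_natCast, ← mul_div_assoc, div_le_iff₀ (by positivity)]
        exact hn.le

theorem inv_mul_rpow_mul_le_div_pow {N D t r : ℝ} (hN : 0 < N) (hD : 0 < D) (ht : 0 < t)
    (h : N * (t / D) ^ r ≤ 2) (d : ℕ) :
    (2 ^ (d + 2) * D ^ (r * (d + 1 : ℕ)))⁻¹ * t ^ (1 + r * (d + 1 : ℕ)) * N ≤ t / 2 / N ^ d := by
  have hpow : N ^ (d + 1) * (t / D) ^ (r * (d + 1 : ℕ)) ≤ 2 ^ (d + 1) := by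
    rw [Real.rpow_mul (by positivity), Real.rpow_natCast, ← mul_pow]
    gcongr
  rw [le_div_iff₀ (by positivity)]
  calc (2 ^ (d + 2) * D ^ (r * (d + 1 : ℕ)))⁻¹ * t ^ (1 + r * (d + 1 : ℕ)) * N * N ^ d
      = t / 2 / 2 ^ (d + 1) * (N ^ (d + 1) * (t / D) ^ (r * (d + 1 : ℕ))) := by
        rw [Real.rpow_add ht, Real.rpow_one, Real.div_rpow ht.le hD.le]
        field_simp
        ring
    _ ≤ t / 2 / 2 ^ (d + 1) * 2 ^ (d + 1) := by gcongr
    _ = t / 2 := div_mul_cancel₀ _ (by positivity)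

end RealPower

section Circle

theorem integral_fourier_of_ne_zero {T : ℝ} [hT : Fact (0 < T)] {n : ℤ} (hn : n ≠ 0) :
    ∫ x : AddCircle T, fourier n x = 0 :=
  integral_eq_zero_of_add_right_eq_neg (fourier_add_half_inv_index hn hT.out)

theorem norm_fourier_apply {T : ℝ} (n : ℤ) (x : AddCircle T) : ‖fourier n x‖ = 1 := by
  rw [fourier_apply, Circle.norm_coe]

theorem fourier_natCast_eq_pow {T : ℝ} (k : ℕ) (x : AddCircle T) :
    fourier (k : ℤ) x = fourier 1 x ^ k := by
  rw [fourier_apply, fourier_one, natCast_zsmul, AddCircle.toCircle_nsmul, Circle.coe_pow]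

theorem four_mul_norm_le_norm_fourier_one_sub_one (x : UnitAddCircle) :
    4 * ‖x‖ ≤ ‖fourier 1 x - 1‖ := by
  obtain ⟨z, hz, rfl⟩ : ∃ z : ℝ, |z| ≤ 1 / 2 ∧ (z : UnitAddCircle) = x := by
    induction x using QuotientAddGroup.induction_on with
    | H y =>
      refine ⟨y - round y, abs_sub_round y, ?_⟩
      rw [AddCircle.coe_sub, sub_eq_self]
      exact (AddCircle.coe_eq_zero_iff (1 : ℝ)).2 ⟨round y, by simp⟩
  have hexp : ‖fourier 1 (z : UnitAddCircle) - 1‖ = 2 * |Real.sin (π * z)| := by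
    have harg : 2 * (π : ℂ) * Complex.I * ((1 : ℤ) : ℂ) * (z : ℂ) / ((1 : ℝ) : ℂ)
        = Complex.I * ((2 * (π * z) : ℝ) : ℂ) := by
      push_cast
      ring
    rw [fourier_coe_apply, harg, Complex.norm_exp_I_mul_ofReal_sub_one,
      mul_div_cancel_left₀ _ two_ne_zero, norm_mul, Real.norm_two, Real.norm_eq_abs]
  have habs : |π * z| = π * |z| := by rw [abs_mul, abs_of_pos Real.pi_pos]
  have hjordan : 2 * |z| ≤ |Real.sin (π * z)| := by
    have h := Real.mul_abs_le_abs_sin (x := π * z) (by rw [habs]; nlinarith [Real.pi_pos])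
    rwa [habs, ← mul_assoc, div_mul_cancel₀ _ Real.pi_ne_zero] at h
  have hnorm : ‖(z : UnitAddCircle)‖ ≤ |z| := by
    rw [UnitAddCircle.norm_eq]
    simpa using round_le z 0
  linarith

instance instIsProbabilityMeasureUnitAddCircle :
    IsProbabilityMeasure (volume : Measure UnitAddCircle) :=
  ⟨UnitAddCircle.measure_univ⟩

/-- The Fejér kernel `N⁻¹ |∑_{k < N} e^{2πikx}|²` on the circle: a nonnegative trigonometric
polynomial of mass one concentrating at `0`. For `N = 0` it is the junk value `0`. -/
noncomputable def fejerKernel (N : ℕ) (x : UnitAddCircle) : ℝ :=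
  ‖∑ k : Fin N, fourier (k : ℤ) x‖ ^ 2 / N

theorem fejerKernel_nonneg (N : ℕ) (x : UnitAddCircle) : 0 ≤ fejerKernel N x := by
  unfold fejerKernel
  positivity

@[fun_prop]
theorem continuous_fejerKernel (N : ℕ) : Continuous (fejerKernel N) := by
  unfold fejerKernel
  fun_prop

theorem fejerKernel_eq_sum_fourier (N : ℕ) (x : UnitAddCircle) :
    (fejerKernel N x : ℂ) = (N : ℂ)⁻¹ * ∑ p : Fin N × Fin N, fourier ((p.1 : ℤ) - p.2) x := by
  unfold fejerKernel
  push_cast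
  rw [← Complex.mul_conj', map_sum, Finset.sum_mul_sum, Fintype.sum_prod_type, div_eq_inv_mul]
  simp only [sub_eq_add_neg, fourier_add, fourier_neg]

theorem integral_fejerKernel {N : ℕ} (hN : N ≠ 0) : ∫ x, fejerKernel N x = 1 := by
  have horth (p : Fin N × Fin N) :
      ∫ x : UnitAddCircle, fourier ((p.1 : ℤ) - p.2) x = if p.1 = p.2 then 1 else 0 := by
    split_ifs with h
    · simp [h]
    · exact integral_fourier_of_ne_zero (by rw [Fin.ext_iff] at h; omega)
  have hcomplex : ∫ x, (fejerKernel N x : ℂ) = 1 := by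
    simp_rw [fejerKernel_eq_sum_fourier]
    rw [integral_const_mul, integral_finsetSum _ fun p _ =>
      integrable_of_continuous (map_continuous (fourier _))]
    simp_rw [horth, Fintype.sum_prod_type]
    simp [hN]
  rw [integral_complex_ofReal] at hcomplex
  exact_mod_cast hcomplex

theorem fejerKernel_mul_norm_sq_le (N : ℕ) (x : UnitAddCircle) :
    fejerKernel N x * ‖x‖ ^ 2 ≤ (4 * (N : ℝ))⁻¹ := by
  have hgeom : (∑ k : Fin N, fourier (k : ℤ) x) * (fourier 1 x - 1) = fourier (N : ℤ) x - 1 := by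
    simp_rw [fourier_natCast_eq_pow]
    rw [Fin.sum_univ_eq_sum_range (fun k => fourier 1 x ^ k), geom_sum_mul]
  have htwo : ‖fourier (N : ℤ) x - 1‖ ≤ 2 := by
    refine (norm_sub_le _ _).trans ?_
    rw [norm_fourier_apply, norm_one, one_add_one_eq_two]
  have hprod : ‖∑ k : Fin N, fourier (k : ℤ) x‖ * (4 * ‖x‖) ≤ 2 := by
    grw [four_mul_norm_le_norm_fourier_one_sub_one, ← norm_mul, hgeom, htwo]
  calc fejerKernel N x * ‖x‖ ^ 2
      = (‖∑ k : Fin N, fourier (k : ℤ) x‖ * (4 * ‖x‖)) ^ 2 / (16 * N) := by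
        unfold fejerKernel
        ring
    _ ≤ (2 : ℝ) ^ 2 / (16 * N) := by gcongr
    _ = (4 * (N : ℝ))⁻¹ := by ring

theorem integral_fejerKernel_mul_norm_rpow_le {N : ℕ} (hN : N ≠ 0) {s : ℝ} (hs₀ : 0 ≤ s)
    (hs₂ : s ≤ 2) : ∫ x, fejerKernel N x * ‖x‖ ^ s ≤ 2 * (N : ℝ) ^ (-s / 2) := by
  have hN₀ : (0 : ℝ) < N := by positivity
  have hpoint (x : UnitAddCircle) :
      fejerKernel N x * ‖x‖ ^ s ≤ (N : ℝ) ^ (-s / 2) * (fejerKernel N x + 1) :=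
    calc fejerKernel N x * ‖x‖ ^ s
        ≤ fejerKernel N x * ((N : ℝ) ^ (-s / 2) * (1 + N * ‖x‖ ^ 2)) :=
          mul_le_mul_of_nonneg_left
            (rpow_le_rpow_neg_half_mul hN₀ (norm_nonneg x) hs₀ hs₂) (fejerKernel_nonneg N x)
      _ = (N : ℝ) ^ (-s / 2) * (fejerKernel N x + N * (fejerKernel N x * ‖x‖ ^ 2)) := by ring
      _ ≤ (N : ℝ) ^ (-s / 2) * (fejerKernel N x + N * (4 * (N : ℝ))⁻¹) := by
          gcongr
          exact fejerKernel_mul_norm_sq_le N x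
      _ ≤ (N : ℝ) ^ (-s / 2) * (fejerKernel N x + 1) := by
          gcongr
          rw [mul_inv, mul_left_comm, mul_inv_cancel₀ hN₀.ne']
          norm_num
  have : Continuous fun x : UnitAddCircle => ‖x‖ ^ s :=
    continuous_norm.rpow_const fun _ => .inr hs₀
  calc ∫ x, fejerKernel N x * ‖x‖ ^ s
      ≤ ∫ x, (N : ℝ) ^ (-s / 2) * (fejerKernel N x + 1) :=
        integral_mono (integrable_of_continuous (by fun_prop))
          (integrable_of_continuous (by fun_prop)) hpoint
    _ = 2 * (N : ℝ) ^ (-s / 2) := by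
        rw [integral_const_mul, integral_add (integrable_of_continuous (by fun_prop))
          (integrable_const _), integral_fejerKernel hN, integral_const, probReal_univ, one_smul]
        ring

end Circle

section Torus

variable {ι : Type*} [Fintype ι]

instance instIsNegInvariantUnitAddTorus :
    (volume : Measure (UnitAddTorus ι)).IsNegInvariant :=
  Measure.pi.isNegInvariant _

theorem norm_mFourier_apply (a : ι → ℤ) (x : UnitAddTorus ι) : ‖mFourier a x‖ = 1 := by
  simp only [mFourier, ContinuousMap.coe_mk, norm_prod, norm_fourier_apply, Finset.prod_const_one]

theorem mFourier_sub_apply (a : ι → ℤ) (x y : UnitAddTorus ι) :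
    mFourier a (x - y) = mFourier a x * mFourier (-a) y := by
  simp [mFourier, fourier_apply, sub_eq_add_neg, AddCircle.toCircle_add, Finset.prod_mul_distrib]

theorem integral_mFourier_of_ne_zero {a : ι → ℤ} (ha : a ≠ 0) :
    ∫ x : UnitAddTorus ι, mFourier a x = 0 := by
  obtain ⟨i, hi⟩ := Function.ne_iff.1 ha
  simp only [mFourier, ContinuousMap.coe_mk]
  rw [integral_fintype_prod_volume_eq_prod (fun i => fourier (a i))]
  exact Finset.prod_eq_zero (Finset.mem_univ i) (integral_fourier_of_ne_zero hi)

theorem pi_norm_rpow_le_sum {V : Type*} [SeminormedAddGroup V] {s : ℝ} (hs : 0 < s) (x : ι → V) :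
    ‖x‖ ^ s ≤ ∑ i, ‖x i‖ ^ s := by
  have hsum : 0 ≤ ∑ i, ‖x i‖ ^ s := by positivity
  rw [← Real.le_rpow_inv_iff_of_pos (norm_nonneg x) hsum hs,
    pi_norm_le_iff_of_nonneg (by positivity)]
  intro i
  rw [Real.le_rpow_inv_iff_of_pos (norm_nonneg _) hsum hs]
  exact Finset.single_le_sum (f := fun i => ‖x i‖ ^ s) (fun i _ => by positivity)
    (Finset.mem_univ i)

/-- The Fejér kernel on the torus, the product of the one-dimensional kernels. It serves as an
approximate identity whose Fourier expansion only involves frequencies below `N`. -/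
noncomputable def torusFejerKernel (N : ℕ) (x : UnitAddTorus ι) : ℝ :=
  ∏ i, fejerKernel N (x i)

/-- The frequency `k - l` in the expansion of `torusFejerKernel N`, where the pair
`p i = (k i, l i)` records one term of `|∑_{k < N} e^{2πikx}|²` in each coordinate. -/
def fejerFreq {N : ℕ} (p : ι → Fin N × Fin N) : ι → ℤ :=
  fun i => ((p i).1 : ℤ) - (p i).2

theorem norm_fejerFreq_le {N : ℕ} (p : ι → Fin N × Fin N) : ‖fejerFreq p‖ ≤ N := by
  refine (pi_norm_le_iff_of_nonneg N.cast_nonneg).2 fun i => ?_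
  have h : |fejerFreq p i| ≤ N := by
    rw [fejerFreq, abs_le]
    omega
  rw [Int.norm_eq_abs]
  exact_mod_cast h

theorem torusFejerKernel_nonneg (N : ℕ) (x : UnitAddTorus ι) : 0 ≤ torusFejerKernel N x :=
  Finset.prod_nonneg fun _ _ => fejerKernel_nonneg _ _

@[fun_prop]
theorem continuous_torusFejerKernel (N : ℕ) :
    Continuous (torusFejerKernel N : UnitAddTorus ι → ℝ) := by
  unfold torusFejerKernel
  fun_prop

theorem integral_torusFejerKernel {N : ℕ} (hN : N ≠ 0) :
    ∫ x : UnitAddTorus ι, torusFejerKernel N x = 1 := by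
  unfold torusFejerKernel
  rw [integral_fintype_prod_volume_eq_prod (fun _ => fejerKernel N)]
  simp only [integral_fejerKernel hN, Finset.prod_const_one]

theorem integral_torusFejerKernel_mul_eval {N : ℕ} (hN : N ≠ 0) (h : UnitAddCircle → ℝ) (i : ι) :
    ∫ x : UnitAddTorus ι, torusFejerKernel N x * h (x i) = ∫ y, fejerKernel N y * h y := by
  classical
  have hprod (x : UnitAddTorus ι) : torusFejerKernel N x * h (x i) =
      ∏ j, (fun y => fejerKernel N y * if j = i then h y else 1) (x j) := by
    rw [Finset.prod_mul_distrib, Finset.prod_ite_eq' Finset.univ i (fun j => h (x j)),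
      if_pos (Finset.mem_univ i), torusFejerKernel]
  simp_rw [hprod]
  rw [integral_fintype_prod_volume_eq_prod
    (fun j y => fejerKernel N y * if j = i then h y else 1), Fintype.prod_eq_single i]
  · simp only [if_true]
  · intro j hj
    simp only [if_neg hj, mul_one, integral_fejerKernel hN]

theorem integral_torusFejerKernel_mul_norm_rpow_le {N : ℕ} (hN : N ≠ 0) {s : ℝ} (hs₀ : 0 < s)
    (hs₂ : s ≤ 2) :
    ∫ x : UnitAddTorus ι, torusFejerKernel N x * ‖x‖ ^ s
      ≤ 2 * Fintype.card ι * (N : ℝ) ^ (-s / 2) := by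
  have hint {g : UnitAddTorus ι → ℝ} (hg : Continuous g) :
      Integrable fun x => torusFejerKernel N x * g x ^ s :=
    integrable_of_continuous
      ((continuous_torusFejerKernel N).mul (hg.rpow_const fun _ => .inr hs₀.le))
  have hint_coord (i : ι) : Integrable fun x : UnitAddTorus ι => torusFejerKernel N x * ‖x i‖ ^ s :=
    hint (by fun_prop)
  calc ∫ x : UnitAddTorus ι, torusFejerKernel N x * ‖x‖ ^ s
      ≤ ∫ x : UnitAddTorus ι, ∑ i, torusFejerKernel N x * ‖x i‖ ^ s := by
        refine integral_mono (hint continuous_norm)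
          (integrable_finsetSum _ fun i _ => hint_coord i) fun x => ?_
        rw [← Finset.mul_sum]
        exact mul_le_mul_of_nonneg_left (pi_norm_rpow_le_sum hs₀ x) (torusFejerKernel_nonneg N x)
    _ = ∑ _i : ι, ∫ y, fejerKernel N y * ‖y‖ ^ s := by
        rw [integral_finsetSum _ fun i _ => hint_coord i]
        exact Finset.sum_congr rfl fun i _ =>
          integral_torusFejerKernel_mul_eval hN (fun y => ‖y‖ ^ s) i
    _ ≤ ∑ _i : ι, 2 * (N : ℝ) ^ (-s / 2) :=
        Finset.sum_le_sum fun _ _ => integral_fejerKernel_mul_norm_rpow_le hN hs₀.le hs₂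
    _ = 2 * Fintype.card ι * (N : ℝ) ^ (-s / 2) := by
        rw [Finset.sum_const, Finset.card_univ, nsmul_eq_mul]
        ring

theorem abs_sub_integral_mul_torusFejerKernel_le {B γ : ℝ≥0} (hγ₀ : 0 < γ) (hγ₂ : γ ≤ 2)
    {f : UnitAddTorus ι → ℝ} (hf : HolderWith B γ f) {N : ℕ} (hN : N ≠ 0) (x : UnitAddTorus ι) :
    |f x - ∫ y, f y * torusFejerKernel N (x - y)|
      ≤ B * (2 * Fintype.card ι * (N : ℝ) ^ (-(γ : ℝ) / 2)) := by
  have hfc : Continuous f := hf.continuous hγ₀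
  have hmass : f x = ∫ y, f x * torusFejerKernel N (x - y) := by
    rw [integral_const_mul, integral_sub_left_eq_self (fun u => torusFejerKernel N u),
      integral_torusFejerKernel hN, mul_one]
  have hdiff : f x - ∫ y, f y * torusFejerKernel N (x - y)
      = ∫ y, (f x - f y) * torusFejerKernel N (x - y) := by
    simp_rw [sub_mul]
    rw [integral_sub (integrable_of_continuous (by fun_prop))
      (integrable_of_continuous (by fun_prop)), ← hmass]
  have hpoint (y : UnitAddTorus ι) : |(f x - f y) * torusFejerKernel N (x - y)|
      ≤ B * (torusFejerKernel N (x - y) * ‖x - y‖ ^ (γ : ℝ)) := by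
    rw [abs_mul, abs_of_nonneg (torusFejerKernel_nonneg N _), mul_left_comm, mul_comm]
    have hxy := hf.dist_le x y
    rw [Real.dist_eq, dist_eq_norm] at hxy
    exact mul_le_mul_of_nonneg_left hxy (torusFejerKernel_nonneg N _)
  calc |f x - ∫ y, f y * torusFejerKernel N (x - y)|
      ≤ ∫ y, |(f x - f y) * torusFejerKernel N (x - y)| :=
        hdiff ▸ abs_integral_le_integral_abs
    _ ≤ ∫ y, B * (torusFejerKernel N (x - y) * ‖x - y‖ ^ (γ : ℝ)) :=
        integral_mono (integrable_of_continuous (by fun_prop))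
          (integrable_of_continuous (by have := γ.coe_nonneg; fun_prop)) hpoint
    _ = B * ∫ u : UnitAddTorus ι, torusFejerKernel N u * ‖u‖ ^ (γ : ℝ) := by
        rw [integral_const_mul,
          integral_sub_left_eq_self (fun u => torusFejerKernel N u * ‖u‖ ^ (γ : ℝ))]
    _ ≤ B * (2 * Fintype.card ι * (N : ℝ) ^ (-(γ : ℝ) / 2)) := by
        gcongr
        exact integral_torusFejerKernel_mul_norm_rpow_le hN (by exact_mod_cast hγ₀)
          (by exact_mod_cast hγ₂)

theorem torusFejerKernel_sub_eq_sum_mFourier [DecidableEq ι] (N : ℕ) (x y : UnitAddTorus ι) :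
    (torusFejerKernel N (x - y) : ℂ) = ((N : ℂ) ^ Fintype.card ι)⁻¹ *
      ∑ p : ι → Fin N × Fin N, mFourier (fejerFreq p) x * mFourier (-fejerFreq p) y := by
  unfold torusFejerKernel
  push_cast
  simp_rw [fejerKernel_eq_sum_fourier, ← mFourier_sub_apply]
  rw [Finset.prod_mul_distrib, Finset.prod_const, Fintype.prod_sum, Finset.card_univ, inv_pow]
  rfl

theorem integral_torusFejerKernel_sub_eq_sum [DecidableEq ι] (N : ℕ) (μ : Measure (UnitAddTorus ι))
    [IsFiniteMeasure μ] (y : UnitAddTorus ι) :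
    ((∫ x, torusFejerKernel N (x - y) ∂μ : ℝ) : ℂ) = ((N : ℂ) ^ Fintype.card ι)⁻¹ *
      ∑ p : ι → Fin N × Fin N, (∫ x, mFourier (fejerFreq p) x ∂μ) * mFourier (-fejerFreq p) y := by
  rw [← integral_complex_ofReal]
  simp_rw [torusFejerKernel_sub_eq_sum_mFourier]
  rw [integral_const_mul, integral_finsetSum _ fun p _ => integrable_of_continuous (by fun_prop)]
  simp_rw [integral_mul_const]

variable {ϑ : Measure (UnitAddTorus ι)} [IsProbabilityMeasure ϑ] {N : ℕ} {M : ℝ}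

theorem norm_integral_mFourier_sub_le (hM₀ : 0 ≤ M)
    (hM : ∀ a : ι → ℤ, a ≠ 0 → ‖a‖ ≤ N → ‖∫ x, mFourier a x ∂ϑ‖ ≤ M) {a : ι → ℤ} (ha : ‖a‖ ≤ N) :
    ‖(∫ x, mFourier a x ∂ϑ) - ∫ x, mFourier a x‖ ≤ M := by
  rcases eq_or_ne a 0 with rfl | ha₀
  · simpa [mFourier_zero] using hM₀
  · rw [integral_mFourier_of_ne_zero ha₀, sub_zero]
    exact hM a ha₀ ha

theorem abs_integral_torusFejerKernel_sub_one_le (hN : N ≠ 0) (hM₀ : 0 ≤ M)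
    (hM : ∀ a : ι → ℤ, a ≠ 0 → ‖a‖ ≤ N → ‖∫ x, mFourier a x ∂ϑ‖ ≤ M) (y : UnitAddTorus ι) :
    |(∫ x, torusFejerKernel N (x - y) ∂ϑ) - 1| ≤ N ^ Fintype.card ι * M := by
  classical
  have hone : ∫ x : UnitAddTorus ι, torusFejerKernel N (x - y) = 1 := by
    rw [integral_sub_right_eq_self (fun u => torusFejerKernel N u), integral_torusFejerKernel hN]
  have hexpand : (((∫ x, torusFejerKernel N (x - y) ∂ϑ) - ∫ x, torusFejerKernel N (x - y) : ℝ) : ℂ)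
      = ((N : ℂ) ^ Fintype.card ι)⁻¹ * ∑ p : ι → Fin N × Fin N,
        ((∫ x, mFourier (fejerFreq p) x ∂ϑ) - ∫ x, mFourier (fejerFreq p) x)
          * mFourier (-fejerFreq p) y := by
    simp_rw [Complex.ofReal_sub, integral_torusFejerKernel_sub_eq_sum, sub_mul,
      Finset.sum_sub_distrib, mul_sub]
  have hterm (p : ι → Fin N × Fin N) :
      ‖((∫ x, mFourier (fejerFreq p) x ∂ϑ) - ∫ x, mFourier (fejerFreq p) x)
        * mFourier (-fejerFreq p) y‖ ≤ M := by
    rw [norm_mul, norm_mFourier_apply, mul_one]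
    exact norm_integral_mFourier_sub_le hM₀ hM (norm_fejerFreq_le p)
  rw [hone] at hexpand
  rw [← Real.norm_eq_abs, ← Complex.norm_real, hexpand, norm_mul]
  calc _ ≤ ‖((N : ℂ) ^ Fintype.card ι)⁻¹‖ * ∑ _p : ι → Fin N × Fin N, M := by
        gcongr
        exact norm_sum_le_of_le _ fun p _ => hterm p
    _ = N ^ Fintype.card ι * M := by
        rw [norm_inv, norm_pow, Complex.norm_natCast, Finset.sum_const, Finset.card_univ,
          nsmul_eq_mul, Fintype.card_fun, Fintype.card_prod, Fintype.card_fin]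
        push_cast
        field_simp
        ring

theorem abs_integral_sub_integral_le_of_holderWith {A B γ : ℝ≥0} (hγ₀ : 0 < γ) (hγ₂ : γ ≤ 2)
    {f : UnitAddTorus ι → ℝ} (hf : HolderWith B γ f) (hA : ∀ x, |f x| ≤ A) (hN : N ≠ 0)
    (hM₀ : 0 ≤ M) (hM : ∀ a : ι → ℤ, a ≠ 0 → ‖a‖ ≤ N → ‖∫ x, mFourier a x ∂ϑ‖ ≤ M) :
    |(∫ x, f x ∂ϑ) - ∫ x, f x| ≤
      B * (2 * Fintype.card ι * (N : ℝ) ^ (-(γ : ℝ) / 2)) + A * (N ^ Fintype.card ι * M) := by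
  have hfc : Continuous f := hf.continuous hγ₀
  set G : UnitAddTorus ι → UnitAddTorus ι → ℝ := fun x y => f y * torusFejerKernel N (x - y)
  have hG : Integrable (Function.uncurry G) (ϑ.prod volume) :=
    integrable_of_continuous (by fun_prop)
  have hsmooth : |(∫ x, f x ∂ϑ) - ∫ x, (∫ y, G x y) ∂ϑ|
      ≤ B * (2 * Fintype.card ι * (N : ℝ) ^ (-(γ : ℝ) / 2)) := by
    have hint : Integrable (fun x => ∫ y, G x y) ϑ := hG.integral_prod_left
    rw [← integral_sub (integrable_of_continuous hfc) hint]
    exact abs_integral_le_of_forall_abs_le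
      (abs_sub_integral_mul_torusFejerKernel_le hγ₀ hγ₂ hf hN)
  have hdensity : |(∫ x, (∫ y, G x y) ∂ϑ) - ∫ y, f y| ≤ A * (N ^ Fintype.card ι * M) := by
    have hint : Integrable (fun y => ∫ x, G x y ∂ϑ) volume := hG.integral_prod_right
    rw [integral_integral_swap hG, ← integral_sub hint (integrable_of_continuous hfc)]
    refine abs_integral_le_of_forall_abs_le fun y => ?_
    rw [integral_const_mul, ← mul_sub_one, abs_mul]
    exact mul_le_mul (hA y) (abs_integral_torusFejerKernel_sub_one_le hN hM₀ hM y)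
      (abs_nonneg _) A.coe_nonneg
  exact (abs_sub_le _ _ _).trans (add_le_add hsmooth hdensity)

theorem exists_mul_rpow_mul_norm_le_norm_integral_mFourier (ι : Type*) [Fintype ι] {γ : ℝ≥0}
    (hγ₀ : 0 < γ) (hγ₂ : γ ≤ 2) :
    ∃ c : ℝ, 0 < c ∧ ∃ p : ℝ, ∀ (ϑ : Measure (UnitAddTorus ι)) [IsProbabilityMeasure ϑ]
      (f : UnitAddTorus ι → ℝ), HolderWith 1 γ f → (∀ x, |f x| ≤ 1) →
      ∀ t, 0 < t → t ≤ 1 → t < |(∫ x, f x ∂ϑ) - ∫ x, f x| →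
      ∃ a : ι → ℤ, a ≠ 0 ∧ c * t ^ p * ‖a‖ ≤ ‖∫ x, mFourier a x ∂ϑ‖ := by
  set d := Fintype.card ι
  set s : ℝ := γ / 2 with hs
  have hs₀ : 0 < s := half_pos (by exact_mod_cast hγ₀)
  set D : ℝ := 4 * (d + 1)
  set q : ℝ := s⁻¹ * (d + 1 : ℕ)
  refine ⟨(2 ^ (d + 2) * D ^ q)⁻¹, by positivity, 1 + q, fun ϑ _ f hf hf₁ t ht ht₁ htf => ?_⟩
  have hD : 1 ≤ D := by simp only [D]; linarith [(Nat.cast_nonneg d : (0 : ℝ) ≤ d)]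
  obtain ⟨N, hN, hNε, hNub⟩ := exists_nat_rpow_neg_le_and_mul_rpow_inv_le hs₀
    (ε := t / D) (by positivity) ((div_le_one (by positivity)).2 (ht₁.trans hD))
  have hN₀ : (0 : ℝ) < N := by positivity
  have hcoeff := inv_mul_rpow_mul_le_div_pow hN₀ (by positivity) ht hNub d
  by_contra! hsmall
  have hbound := abs_integral_sub_integral_le_of_holderWith (A := 1) (M := t / 2 / N ^ d) hγ₀ hγ₂
    hf hf₁ hN (by positivity) fun a ha haN => by
      grw [hsmall a ha, haN, hcoeff]
  have hsmoothing : 2 * d * (N : ℝ) ^ (-(γ : ℝ) / 2) ≤ t / 2 :=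
    calc 2 * d * (N : ℝ) ^ (-(γ : ℝ) / 2) ≤ 2 * (d + 1) * (t / D) := by
          rw [neg_div, ← hs]
          gcongr
          linarith
      _ = t / 2 := by
          simp only [D]
          field_simp
          ring
  have hcancel : (N : ℝ) ^ d * (t / 2 / N ^ d) = t / 2 := mul_div_cancel₀ _ (by positivity)
  rw [NNReal.coe_one, one_mul, one_mul, hcancel] at hbound
  linarith

end Torus

namespace HolderNormLE

variable {d : ℕ} {f : Torus d → ℝ} {γ K : ℝ≥0}

theorem abs_le (hf : HolderNormLE γ f K) (x : Torus d) : |f x| ≤ K := by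
  obtain ⟨A, B, -, hB, hAB, hfA, -⟩ := hf
  linarith [hfA x]

theorem holderWith (hf : HolderNormLE γ f K) : HolderWith K γ f := by
  obtain ⟨A, B, hA, -, hAB, -, hfB⟩ := hf
  intro x y
  have hxy : dist (f x) (f y) ≤ K * dist x y ^ (γ : ℝ) := by
    grw [Real.dist_eq, hfB x y, ← hAB, ← hA, zero_add]
  rw [edist_nndist, edist_nndist, ← ENNReal.coe_rpow_of_nonneg _ γ.coe_nonneg, ← ENNReal.coe_mul,
    ENNReal.coe_le_coe]
  exact_mod_cast hxy

theorem abs_sub_le (hf : HolderNormLE γ f K) (x y : Torus d) : |f x - f y| ≤ 2 / 3 * K := by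
  obtain ⟨A, B, -, hB, hAB, hfA, hfB⟩ := hf
  have hdist : dist x y ≤ 1 := by
    refine (dist_pi_le_iff zero_le_one).2 fun i => ?_
    have h := AddCircle.norm_le_half_period (1 : ℝ) (x := x i - y i) one_ne_zero
    rw [abs_one] at h
    rw [dist_eq_norm]
    linarith
  have hosc : |f x - f y| ≤ B :=
    (hfB x y).trans (mul_le_of_le_one_right hB (Real.rpow_le_one dist_nonneg hdist γ.coe_nonneg))
  have hsup : |f x - f y| ≤ A + A := (abs_sub _ _).trans (add_le_add (hfA x) (hfA y))
  linarith

end HolderNormLE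

/-- For every `γ ∈ (0,1]` there is `C > 0`, depending only on `d` and `γ`,
such that for every Borel probability measure `ϑ` on `𝕋^d` and every `t > 0`: if
`W_γ(ϑ,ν) > t` (i.e. some `f` with `‖f‖_γ ≤ 1` has `|∫ f dϑ − ∫ f dν| > t`), then there is
`a ∈ ℤ^d \ {0}` with `|ϑ̂(a)| ≥ C t^C ‖a‖`. -/
theorem stmt10 (d : ℕ) (γ : ℝ) (hγ0 : 0 < γ) (hγ1 : γ ≤ 1) :
    ∃ C : ℝ, 0 < C ∧
      ∀ ϑ : Measure (Torus d), IsProbabilityMeasure ϑ →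
        ∀ t : ℝ, 0 < t →
          (∃ f : Torus d → ℝ, HolderNormLE γ f 1 ∧
            t < |(∫ x, f x ∂ϑ) - ∫ x, f x ∂(volume : Measure (Torus d))|) →
          ∃ a : Fin d → ℤ, a ≠ 0 ∧
            C * t ^ C * ‖fun i => (a i : ℝ)‖ ≤ ‖fourierCoefMeasure ϑ a‖ := by
  lift γ to ℝ≥0 using hγ0.le
  have hγ₀ : 0 < γ := by exact_mod_cast hγ0
  have hγ₁ : γ ≤ 1 := by exact_mod_cast hγ1
  obtain ⟨c, hc, p, hcoeff⟩ := exists_mul_rpow_mul_norm_le_norm_integral_mFourier (Fin d) hγ₀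
    (hγ₁.trans one_le_two)
  obtain ⟨C, hC, hCc⟩ := exists_pos_mul_rpow_self_le (p := p) (r := 2 / 3) hc (by norm_num)
    (by norm_num)
  refine ⟨C, hC, fun ϑ _ t ht ⟨f, hf, htf⟩ => ?_⟩
  have hf₁ : HolderNormLE γ f (1 : ℝ≥0) := hf
  have hfc : Continuous f := hf₁.holderWith.continuous hγ₀
  have ht_le : t ≤ 2 / 3 := by
    have hosc := abs_integral_sub_integral_le_of_forall_abs_sub_le (μ := ϑ) (ν := volume)
      (integrable_of_continuous hfc) (integrable_of_continuous hfc) hf₁.abs_sub_le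
    rw [NNReal.coe_one, mul_one] at hosc
    exact htf.le.trans hosc
  obtain ⟨a, ha, hle⟩ := hcoeff ϑ f hf₁.holderWith hf₁.abs_le t ht (by linarith) htf
  exact ⟨a, ha, (mul_le_mul_of_nonneg_right (hCc t ht ht_le) (norm_nonneg a)).trans hle⟩
end

section
/- Let ρ be a Borel probability measure on SL_d(ℤ) with Markov operator Pf(x) = ∫ f(gx) dρ(g) on the torus 𝕋^d. Let δ > 0, a ∈ (0,1), b ∈ ℝ, and let u₀ : 𝕋^d → [0,∞] be Borel with Pu₀ ≤ a·u₀ + b. Let φ : ℕ → ℝ₊* be strictly increasing with ∑_{n≥1} n^d/φ(n)^δ < ∞, and define for x ∈ 𝕋^d: u_φ(x) = 1 + ∑_{Q∈ℕ*} φ(Q)^{−δ} ∑_{p ∈ X_Q} u₀(x − p), where X_Q is the set of primitive points of denominator Q. Then there exist a' ∈ (0,1) and b' ∈ ℝ such that P u_φ ≤ a'·u_φ + b'. -/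
open MeasureTheory Filter Set Matrix
open scoped ENNReal NNReal Real

abbrev SL (d : ℕ) := Matrix.SpecialLinearGroup (Fin d) ℤ

/-- `SL_d(ℤ)` is a countable discrete group; we endow it with the discrete σ-algebra. -/
instance (d : ℕ) : MeasurableSpace (SL d) := ⊤

/-- The real matrix associated to an element of `SL_d(ℤ)`. -/
def matR {d : ℕ} (g : SL d) : Matrix (Fin d) (Fin d) ℝ :=
  (g : Matrix (Fin d) (Fin d) ℤ).map ((↑) : ℤ → ℝ)

/-- The linear action of `SL_d(ℤ)` on `ℝ^d/ℤ^d`. -/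
noncomputable def torusSMul {d : ℕ} (g : SL d) (x : Torus d) : Torus d :=
  fun i => ∑ j, (g : Matrix (Fin d) (Fin d) ℤ) i j • x j

/-- A norm on `SL_d(ℤ)`. -/
def slNorm {d : ℕ} (g : SL d) : ℝ :=
  ∑ i, ∑ j, |((g : Matrix (Fin d) (Fin d) ℤ) i j : ℝ)|

/-- `ρ` has an exponential moment: `∫ ‖g‖^ε dρ(g) < ∞` for some `ε > 0`. -/
def HasExpMoment {d : ℕ} (ρ : Measure (SL d)) : Prop :=
  ∃ ε : ℝ, 0 < ε ∧ ∫⁻ g, ENNReal.ofReal (slNorm g ^ ε) ∂ρ ≠ ∞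

/-- The subgroup generated by the support of `ρ`. -/
def suppGroup {d : ℕ} (ρ : Measure (SL d)) : Subgroup (SL d) :=
  Subgroup.closure {g : SL d | ρ {g} ≠ 0}

/-- A subgroup of `SL_d(ℤ)` acts strongly irreducibly on `ℝ^d` if it fixes no nonempty finite
union of proper nonzero subspaces. -/
def StronglyIrreducible {d : ℕ} (Γ : Subgroup (SL d)) : Prop :=
  ¬ ∃ S : Finset (Submodule ℝ (Fin d → ℝ)), S.Nonempty ∧
      (∀ V ∈ S, V ≠ ⊥ ∧ V ≠ ⊤) ∧
      ∀ g ∈ Γ, ∀ V ∈ S, V.map (matR g).mulVecLin ∈ S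

/-- A subgroup of `SL_d(ℤ)` acts proximally on `ℝ^d` if some element `h` admits an invariant
line `L` and an invariant complementary hyperplane `W` such that the spectral radius of `h`
restricted to `W` is strictly smaller than the one restricted to `L`. -/
def Proximal {d : ℕ} (Γ : Subgroup (SL d)) : Prop :=
  ∃ h ∈ Γ, ∃ L W : Submodule ℝ (Fin d → ℝ),
    IsCompl L W ∧ Module.finrank ℝ L = 1 ∧ Module.finrank ℝ W = d - 1 ∧
    ∃ (hL : ∀ v ∈ L, (matR h).mulVecLin v ∈ L) (hW : ∀ v ∈ W, (matR h).mulVecLin v ∈ W),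
      spectralRadius ℝ (LinearMap.toContinuousLinearMap ((matR h).mulVecLin.restrict hW)) <
      spectralRadius ℝ (LinearMap.toContinuousLinearMap ((matR h).mulVecLin.restrict hL))

/-- The product `g_n ⋯ g_1` of an `n`-tuple `(g_1, …, g_n)`. -/
def finWordProd {d : ℕ} {n : ℕ} (g : Fin n → SL d) : SL d :=
  (List.ofFn g).reverse.prod

/-- The measure `ρ^{∗n} ∗ δ_x`: the law of `g_n ⋯ g_1 x` where `(g_i)` are i.i.d. of law `ρ`. -/
noncomputable def walkLaw {d : ℕ} (ρ : Measure (SL d)) (n : ℕ) (x : Torus d) :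
    Measure (Torus d) :=
  Measure.map (fun g : Fin n → SL d => torusSMul (finWordProd g) x)
    (Measure.pi fun _ : Fin n => ρ)

/-- The diophantine height `h_φ(x) = sup_{p/q} 1/(φ(q) d(x,p/q))`, as a `[0,∞]`-valued
function; the supremum runs over the rational points `p` of the torus and the positive
integers `q` with `q • p = 0`. -/
noncomputable def diophHeight {d : ℕ} (φ : ℝ → ℝ) (x : Torus d) : ℝ≥0∞ :=
  ⨆ (q : ℕ) (_ : 0 < q) (p : Torus d) (_ : q • p = 0),
    (ENNReal.ofReal (φ q) * edist x p)⁻¹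

/-- `p` is a primitive rational point of the torus with denominator exactly `Q`. -/
def IsPrimitivePt {d : ℕ} (Q : ℕ) (p : Torus d) : Prop :=
  Q • p = 0 ∧ ∀ q : ℕ, 0 < q → q < Q → q • p ≠ 0

/-- The drift function `u_φ(x) = 1 + ∑_{Q ≥ 1} φ(Q)^{−δ} ∑_{p ∈ X_Q} u₀(x − p)`. -/
noncomputable def uPhi {d : ℕ} (δ : ℝ) (φ : ℕ → ℝ) (u₀ : Torus d → ℝ≥0∞)
    (x : Torus d) : ℝ≥0∞ :=
  1 + ∑' Q : ℕ, ENNReal.ofReal (φ (Q + 1) ^ (-δ)) *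
    ∑' p : {p : Torus d // IsPrimitivePt (Q + 1) p}, u₀ (x - (p : Torus d))

/-!
The condition `P u ≤ a * u + b` survives countable nonnegative combinations with the same
contraction factor `a`; only the additive constants add up. Since each `g ∈ SL_d(ℤ)` acts on the
torus by an automorphism permuting `X_Q`, the sum of `u₀ (g • x - p)` over `p ∈ X_Q` is the sum of
`u₀ (g • (x - p))`, so `x ↦ ∑ p ∈ X_Q, u₀ (x - p)` has additive constant `|X_Q| * b ≤ Q ^ d * b`.
By the hypothesis on `φ`, these constants, weighted by `φ(Q)^(-δ)`, have a finite sum.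
-/

section Drift

/-- The drift (Foster–Lyapunov) inequality `P u ≤ a * u + b`, where `P` is the Markov operator
`P u x = ∫ u (g • x) dρ(g)` of a measure `ρ` acting on `X`. All quantities are `[0, ∞]`-valued, so
that no integrability is required of `u`. -/
def HasDrift {G X : Type*} [MeasurableSpace G] [SMul G X] (ρ : Measure G) (a b : ℝ≥0∞)
    (u : X → ℝ≥0∞) : Prop :=
  ∀ x, ∫⁻ g, u (g • x) ∂ρ ≤ a * u x + b

variable {G X : Type*} [MeasurableSpace G] [SMul G X] {ρ : Measure G} {a b : ℝ≥0∞}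
  {u : X → ℝ≥0∞}

theorem HasDrift.mono_right {b' : ℝ≥0∞} (h : HasDrift ρ a b u) (hb : b ≤ b') :
    HasDrift ρ a b' u :=
  fun x ↦ (h x).trans (by gcongr)

theorem HasDrift.const_add (h : HasDrift ρ a b u) (c : ℝ≥0∞) :
    HasDrift ρ a (c * ρ univ + b) fun x ↦ c + u x := fun x ↦
  calc ∫⁻ g, c + u (g • x) ∂ρ = c * ρ univ + ∫⁻ g, u (g • x) ∂ρ := by
        rw [lintegral_add_left measurable_const, lintegral_const]
    _ ≤ c * ρ univ + (a * u x + b) := by gcongr; exact h x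
    _ = a * u x + (c * ρ univ + b) := add_left_comm _ _ _
    _ ≤ a * (c + u x) + (c * ρ univ + b) := by gcongr; exact le_add_self

variable [DiscreteMeasurableSpace G]

theorem HasDrift.const_mul (h : HasDrift ρ a b u) (c : ℝ≥0∞) :
    HasDrift ρ a (c * b) fun x ↦ c * u x := fun x ↦
  calc ∫⁻ g, c * u (g • x) ∂ρ = c * ∫⁻ g, u (g • x) ∂ρ := lintegral_const_mul _ .of_discrete
    _ ≤ c * (a * u x + b) := by gcongr; exact h x
    _ = a * (c * u x) + c * b := by ring

theorem HasDrift.tsum {ι : Type*} [Countable ι] {b : ι → ℝ≥0∞} {u : ι → X → ℝ≥0∞}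
    (h : ∀ i, HasDrift ρ a (b i) (u i)) :
    HasDrift ρ a (∑' i, b i) fun x ↦ ∑' i, u i x := fun x ↦
  calc ∫⁻ g, ∑' i, u i (g • x) ∂ρ = ∑' i, ∫⁻ g, u i (g • x) ∂ρ :=
        lintegral_tsum fun _ ↦ Measurable.of_discrete.aemeasurable
    _ ≤ ∑' i, (a * u i x + b i) := ENNReal.tsum_le_tsum fun i ↦ h i x
    _ = a * ∑' i, u i x + ∑' i, b i := by rw [ENNReal.tsum_add, ENNReal.tsum_mul_left]

end Drift

section InvariantSet

variable {G A : Type*} [Group G] [AddGroup A] [DistribMulAction G A] {S : Set A}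

theorem tsum_smul_sub_of_invariant {M : Type*} [AddCommMonoid M] [TopologicalSpace M]
    (hS : ∀ (g : G) (p : A), g • p ∈ S ↔ p ∈ S) (f : A → M) (g : G) (x : A) :
    ∑' p : S, f (g • x - p) = ∑' p : S, f (g • (x - p)) := by
  simp only [smul_sub]
  exact (((MulAction.toPerm g).subtypeEquiv fun p ↦ (hS g p).symm).tsum_eq
    fun p : S ↦ f (g • x - p)).symm

theorem HasDrift.tsum_sub [MeasurableSpace G] [DiscreteMeasurableSpace G] {ρ : Measure G}
    {a b : ℝ≥0∞} {u : A → ℝ≥0∞} (h : HasDrift ρ a b u) (hcount : S.Countable)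
    (hS : ∀ (g : G) (p : A), g • p ∈ S ↔ p ∈ S) :
    HasDrift ρ a (S.encard * b) fun x ↦ ∑' p : S, u (x - p) := fun x ↦ by
  have : Countable S := hcount.to_subtype
  calc ∫⁻ g, ∑' p : S, u (g • x - p) ∂ρ = ∫⁻ g, ∑' p : S, u (g • (x - p)) ∂ρ := by
        simp only [tsum_smul_sub_of_invariant hS]
    _ = ∑' p : S, ∫⁻ g, u (g • (x - p)) ∂ρ :=
        lintegral_tsum fun _ ↦ Measurable.of_discrete.aemeasurable
    _ ≤ ∑' p : S, (a * u (x - p) + b) := ENNReal.tsum_le_tsum fun p ↦ h (x - p)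
    _ = a * ∑' p : S, u (x - p) + S.encard * b := by
        rw [ENNReal.tsum_add, ENNReal.tsum_mul_left, ENNReal.tsum_const, Set.encard]

end InvariantSet

section PrimitivePoints

variable {d : ℕ}

theorem isPrimitivePt_smul_iff {G : Type*} [Group G] [DistribMulAction G (Torus d)] {Q : ℕ}
    (g : G) (p : Torus d) : IsPrimitivePt Q (g • p) ↔ IsPrimitivePt Q p := by
  simp only [IsPrimitivePt, smul_comm _ g p, smul_eq_zero_iff_eq, ne_eq]

theorem encard_isPrimitivePt_le {Q : ℕ} (hQ : Q ≠ 0) :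
    {p : Torus d | IsPrimitivePt Q p}.encard ≤ (Q ^ d : ℕ) := by
  have hreg : IsSMulRegular ℝ Q := .of_right_eq_zero_of_smul fun _ ↦ by simp [hQ]
  calc {p : Torus d | IsPrimitivePt Q p}.encard
      ≤ (univ.pi fun _ : Fin d ↦ {t : UnitAddCircle | Q • t = 0}).encard :=
        encard_le_encard fun _ hp i _ ↦ congrFun hp.1 i
    _ = {t : UnitAddCircle | Q • t = 0}.encard ^ d := by simp [encard_pi_eq_prod_encard]
    _ ≤ (Q : ℕ∞) ^ d := by
        gcongr
        exact AddCircle.card_torsion_le_of_isSMulRegular 1 Q hQ hreg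
    _ = (Q ^ d : ℕ) := by push_cast; rfl

theorem countable_isPrimitivePt {Q : ℕ} (hQ : Q ≠ 0) :
    {p : Torus d | IsPrimitivePt Q p}.Countable :=
  (finite_of_encard_le_coe (encard_isPrimitivePt_le hQ)).countable

end PrimitivePoints

section TorusAction

variable {d : ℕ}

instance : DiscreteMeasurableSpace (SL d) := ⟨fun _ ↦ trivial⟩

theorem torusSMul_one (x : Torus d) : torusSMul 1 x = x := by
  funext i
  simp [torusSMul, Matrix.one_apply, ite_smul]

theorem torusSMul_mul (g h : SL d) (x : Torus d) :
    torusSMul (g * h) x = torusSMul g (torusSMul h x) := by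
  funext i
  simp only [torusSMul, Matrix.SpecialLinearGroup.coe_mul, Matrix.mul_apply, Finset.smul_sum,
    Finset.sum_smul, mul_smul]
  exact Finset.sum_comm

theorem torusSMul_zero (g : SL d) : torusSMul g 0 = 0 := by
  funext i
  simp [torusSMul]

theorem torusSMul_add (g : SL d) (x y : Torus d) :
    torusSMul g (x + y) = torusSMul g x + torusSMul g y := by
  funext i
  simp [torusSMul, Finset.sum_add_distrib]

/-- `SL_d(ℤ)` acts on the torus by group automorphisms through `torusSMul`. Registering this action
makes the results on abstract group actions apply to it. -/
noncomputable instance : DistribMulAction (SL d) (Torus d) where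
  smul := torusSMul
  one_smul := torusSMul_one
  mul_smul := torusSMul_mul
  smul_zero := torusSMul_zero
  smul_add := torusSMul_add

end TorusAction

section DriftFunction

variable {d : ℕ}

theorem hasDrift_uPhi {ρ : Measure (SL d)} {a b : ℝ≥0∞} {u₀ : Torus d → ℝ≥0∞}
    (h : HasDrift ρ a b u₀) (δ : ℝ) (φ : ℕ → ℝ) :
    HasDrift ρ a (ρ univ + (∑' Q : ℕ, ENNReal.ofReal (φ (Q + 1) ^ (-δ)) * ((Q + 1) ^ d : ℕ)) * b)
      (uPhi δ φ u₀) := by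
  have hprim (Q : ℕ) : HasDrift ρ a (((Q + 1) ^ d : ℕ) * b)
      fun x ↦ ∑' p : {p : Torus d // IsPrimitivePt (Q + 1) p}, u₀ (x - p) := by
    have hcount := countable_isPrimitivePt (d := d) Q.succ_ne_zero
    refine (h.tsum_sub hcount isPrimitivePt_smul_iff).mono_right ?_
    gcongr
    exact_mod_cast ENat.toENNReal_le.2 (encard_isPrimitivePt_le Q.succ_ne_zero)
  convert (HasDrift.tsum fun Q ↦ (hprim Q).const_mul (.ofReal (φ (Q + 1) ^ (-δ)))).const_add 1
    using 1
  · simp only [one_mul, ← mul_assoc, ENNReal.tsum_mul_right]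
  · rfl

theorem tsum_ofReal_rpow_neg_mul_pow_ne_top {δ : ℝ} {φ : ℕ → ℝ} (hφpos : ∀ n, 0 < φ n)
    (hφsum : Summable fun n : ℕ ↦ (n : ℝ) ^ d / φ n ^ δ) :
    ∑' Q : ℕ, ENNReal.ofReal (φ (Q + 1) ^ (-δ)) * ((Q + 1) ^ d : ℕ) ≠ ∞ := by
  convert ((summable_nat_add_iff 1).2 hφsum).tsum_ofReal_ne_top using 3 with Q
  rw [← ENNReal.ofReal_natCast, ← ENNReal.ofReal_mul (Real.rpow_nonneg (hφpos _).le _),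
    Real.rpow_neg (hφpos _).le, Nat.cast_pow, div_eq_inv_mul]

theorem stmt15_general {ρ : Measure (SL d)} [IsFiniteMeasure ρ] {δ : ℝ} {a : ℝ≥0∞} {b : ℝ≥0}
    {u₀ : Torus d → ℝ≥0∞} (hdrift : HasDrift ρ a b u₀) {φ : ℕ → ℝ} (hφpos : ∀ n, 0 < φ n)
    (hφsum : Summable fun n : ℕ ↦ (n : ℝ) ^ d / φ n ^ δ) :
    ∃ b' : ℝ≥0, HasDrift ρ a b' (uPhi δ φ u₀) := by
  have hC := tsum_ofReal_rpow_neg_mul_pow_ne_top hφpos hφsum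
  have hb' : ρ univ + (∑' Q : ℕ, ENNReal.ofReal (φ (Q + 1) ^ (-δ)) * ((Q + 1) ^ d : ℕ)) * b ≠ ∞ :=
    ENNReal.add_ne_top.2 ⟨measure_ne_top ρ univ, ENNReal.mul_ne_top hC ENNReal.coe_ne_top⟩
  exact ⟨_, (hasDrift_uPhi hdrift δ φ).mono_right (ENNReal.coe_toNNReal hb').ge⟩

end DriftFunction

/-- If `Pu₀ ≤ a·u₀ + b` with `a ∈ (0,1)`, and `φ : ℕ → ℝ₊*` is strictly
increasing with `∑ n^d/φ(n)^δ < ∞`, then `u_φ` satisfies `Pu_φ ≤ a'·u_φ + b'` for some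
`a' ∈ (0,1)` and `b' ∈ ℝ`. -/
theorem stmt15 (d : ℕ) (ρ : Measure (SL d)) (hρ : IsProbabilityMeasure ρ)
    (δ : ℝ) (hδ : 0 < δ) (a b : ℝ) (ha0 : 0 < a) (ha1 : a < 1)
    (u₀ : Torus d → ℝ≥0∞) (hu₀ : Measurable u₀)
    (hdrift : ∀ x : Torus d,
      (∫⁻ g : SL d, u₀ (torusSMul g x) ∂ρ) ≤ ENNReal.ofReal a * u₀ x + ENNReal.ofReal b)
    (φ : ℕ → ℝ) (hφmono : StrictMono φ) (hφpos : ∀ n, 0 < φ n)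
    (hφsum : Summable fun n : ℕ => (n : ℝ) ^ d / φ n ^ δ) :
    ∃ a' b' : ℝ, 0 < a' ∧ a' < 1 ∧
      ∀ x : Torus d,
        (∫⁻ g : SL d, uPhi δ φ u₀ (torusSMul g x) ∂ρ) ≤
          ENNReal.ofReal a' * uPhi δ φ u₀ x + ENNReal.ofReal b' := by
  obtain ⟨b', hb'⟩ := stmt15_general hdrift hφpos hφsum
  exact ⟨a, b', ha0, ha1, by rwa [ENNReal.ofReal_coe_nnreal]⟩
end
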